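/- Let d ≥ 3 and let I = I_3(G) ⊆ S = ℂ[m_0,…,m_d]. Let ≼ be a monomial order on the exponent vectors of S such that for every choice of columns 1 ≤ i < j < k ≤ d, the leading monomial of the corresponding 3×3 minor of G with respect to ≼ is its antidiagonal monomial, i.e., the product of the (1,k), (2,j) and (3,i) entries of G (for example, the degree reverse lexicographic order with m_0 > m_1 > ⋯ > m_d has this property). Then the 3×3 minors of G form a Gröbner basis of I with respect to ≼: for every nonzero f ∈ I, the leading monomial of f is divisible by the leading monomial of some 3×3 minor of G. -/

import Mathlib

open MvPolynomial

/-- The `3 × d` matrix `G` of the gamma moment variety: its `c`-th column, for `1 ≤ c ≤ d`,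
is `((c-1)·m_{c-1}, m_{c-1}, m_c)ᵀ`.  Columns are indexed by `Fin d`, with `c : Fin d`
corresponding to the paper's column `c + 1`. -/
noncomputable def gammaMatrix (d : ℕ) :
    Matrix (Fin 3) (Fin d) (MvPolynomial (Fin (d + 1)) ℂ) :=
  Matrix.of fun r c =>
    ![C (c.val : ℂ) * X ⟨c.val, by have := c.isLt; omega⟩,
      X ⟨c.val, by have := c.isLt; omega⟩,
      X ⟨c.val + 1, by have := c.isLt; omega⟩] r

/-- The ideal `I₃(G)` generated by all `3 × 3` minors of `G`, i.e. determinants of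
submatrices obtained by choosing `3` of the `d` columns. -/
noncomputable def gammaIdeal (d : ℕ) : Ideal (MvPolynomial (Fin (d + 1)) ℂ) :=
  Ideal.span
    { p | ∃ s : Fin 3 → Fin d, StrictMono s ∧ p = ((gammaMatrix d).submatrix id s).det }


/-- Type synonym carrying the order. -/
def GSyn (d : ℕ) : Type := Fin (d + 1) →₀ ℕ

noncomputable instance (d : ℕ) : AddCommMonoid (GSyn d) :=
  inferInstanceAs (AddCommMonoid (Fin (d + 1) →₀ ℕ))

/-- The monomial order attached to the relation `le`. -/
noncomputable def gammaOrder (d : ℕ)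
    (le : (Fin (d + 1) →₀ ℕ) → (Fin (d + 1) →₀ ℕ) → Prop)
    (hlin : IsLinearOrder _ le)
    (hadd : ∀ a b c : Fin (d + 1) →₀ ℕ, le a b → le (a + c) (b + c))
    (hzero : ∀ a : Fin (d + 1) →₀ ℕ, le 0 a) : MonomialOrder (Fin (d + 1)) :=
  letI lo : LinearOrder (GSyn d) :=
    { le := le
      le_refl := hlin.refl
      le_trans := hlin.trans
      le_antisymm := hlin.antisymm
      le_total := hlin.total
      toDecidableLE := Classical.decRel _ }
  have hmono : ∀ a b : Fin (d + 1) →₀ ℕ, (∀ i, a i ≤ b i) → le a b := by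
    intro a b h
    have h2 := hadd 0 (b - a) a (hzero _)
    have h3 : b - a + a = b := by
      ext i
      have := h i
      simp only [Finsupp.add_apply, Finsupp.tsub_apply]
      omega
    rwa [zero_add, h3] at h2
  { syn := GSyn d
    addCommMonoidSyn := inferInstance
    linearOrderSyn := lo
    isOrderedAddMonoid_syn :=
      { add_le_add_left := fun a b h c => hadd a b c h }
    toSyn := AddEquiv.refl (Fin (d + 1) →₀ ℕ)
    toSyn_monotone := fun a b h => hmono a b (fun i => h i)
    wellFoundedLT_syn := by
      refine ⟨?_⟩
      rw [RelEmbedding.wellFounded_iff_isEmpty]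
      refine ⟨fun g => ?_⟩
      obtain ⟨m, n, hmn, hle⟩ := (Finsupp.wellQuasiOrderedLE (α := ℕ) (σ := Fin (d + 1))).wqo g
      have h1 : lo.lt (g n) (g m) := g.map_rel_iff.2 hmn
      have h2 : lo.le (g m) (g n) := hmono _ _ (fun i => hle i)
      exact absurd h2 (@not_le_of_gt _ lo.toPreorder _ _ h1) }

theorem gammaOrder_le_iff (d : ℕ)
    (le : (Fin (d + 1) →₀ ℕ) → (Fin (d + 1) →₀ ℕ) → Prop) (hlin hadd hzero)
    (a b : Fin (d + 1) →₀ ℕ) :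
    (gammaOrder d le hlin hadd hzero).toSyn a ≤ (gammaOrder d le hlin hadd hzero).toSyn b
      ↔ le a b := Iff.rfl

/-- Rising factorial polynomial. -/
noncomputable def gP (c : ℕ) : Polynomial ℂ :=
  ∏ j ∈ Finset.range c, (Polynomial.X + Polynomial.C (j : ℂ))

theorem gP_factor (k c : ℕ) : ∃ R : Polynomial ℂ,
    gP c = (Polynomial.X + Polynomial.C (k : ℂ)) ^ (if k < c then 1 else 0) * R ∧
      R.eval (-(k : ℂ)) ≠ 0 := by
  have key : ∀ s : Finset ℕ, k ∉ s →
      (∏ j ∈ s, (Polynomial.X + Polynomial.C (j : ℂ))).eval (-(k : ℂ)) ≠ 0 := by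
    intro s hs
    rw [Polynomial.eval_prod, Finset.prod_ne_zero_iff]
    intro j hj h
    simp only [Polynomial.eval_add, Polynomial.eval_X, Polynomial.eval_C] at h
    have h2 : (j : ℂ) = k := by linear_combination h
    have h3 : j = k := by exact_mod_cast h2
    exact hs (h3 ▸ hj)
  by_cases h : k < c
  · refine ⟨∏ j ∈ (Finset.range c).erase k, (Polynomial.X + Polynomial.C (j : ℂ)), ?_, ?_⟩
    · rw [if_pos h, pow_one, gP, Finset.mul_prod_erase _ (fun j : ℕ => Polynomial.X + Polynomial.C (j : ℂ)) (Finset.mem_range.2 h)]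
    · exact key _ (by simp)
  · refine ⟨gP c, by simp [h], key _ (by simpa using h)⟩

/-- total degree -/
def gDeg {d : ℕ} (e : Fin (d + 1) →₀ ℕ) : ℕ := ∑ i, e i
/-- weight -/
def gWt {d : ℕ} (e : Fin (d + 1) →₀ ℕ) : ℕ := ∑ i, i.val * e i
/-- image of a monomial -/
noncomputable def gQ {d : ℕ} (e : Fin (d + 1) →₀ ℕ) : Polynomial ℂ := ∏ i, gP i.val ^ e i

theorem gQ_factor {d : ℕ} (k : ℕ) (e : Fin (d + 1) →₀ ℕ) : ∃ R : Polynomial ℂ,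
    gQ e = (Polynomial.X + Polynomial.C (k : ℂ)) ^ (∑ i, if k < i.val then e i else 0) * R ∧
      R.eval (-(k : ℂ)) ≠ 0 := by
  choose R hR hR0 using gP_factor k
  refine ⟨∏ i : Fin (d + 1), R i.val ^ e i, ?_, ?_⟩
  · rw [gQ, ← Finset.prod_pow_eq_pow_sum, ← Finset.prod_mul_distrib]
    refine Finset.prod_congr rfl fun i _ => ?_
    rw [hR i.val, mul_pow, ← pow_mul]
    split_ifs <;> simp
  · rw [Polynomial.eval_prod, Finset.prod_ne_zero_iff]
    intro i _
    rw [Polynomial.eval_pow]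
    exact pow_ne_zero _ (hR0 _)

/-- exponent of the bigrading -/
noncomputable def gE (a b : ℕ) : Fin 2 →₀ ℕ := Finsupp.single 0 a + Finsupp.single 1 b

theorem gE_inj {a b a' b' : ℕ} : gE a b = gE a' b' ↔ a = a' ∧ b = b' := by
  constructor
  · intro h
    have h0 := DFunLike.congr_fun h 0
    have h1 := DFunLike.congr_fun h 1
    simp [gE] at h0 h1
    exact ⟨h0, h1⟩
  · rintro ⟨rfl, rfl⟩; rfl

/-- The parametrization. -/
noncomputable def gPhi (d : ℕ) :
    MvPolynomial (Fin (d + 1)) ℂ →+* MvPolynomial (Fin 2) (Polynomial ℂ) :=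
  eval₂Hom ((MvPolynomial.C).comp Polynomial.C)
    (fun c : Fin (d + 1) => monomial (gE 1 c.val) (gP c.val))

theorem gPhi_monomial {d : ℕ} (e : Fin (d + 1) →₀ ℕ) (c : ℂ) :
    gPhi d (monomial e c) = monomial (gE (gDeg e) (gWt e)) (Polynomial.C c * gQ e) := by
  have h1 : gE (gDeg e) (gWt e) = ∑ i, e i • gE 1 i.val := by
    ext j
    fin_cases j <;> simp [gE, gDeg, gWt, Finsupp.finsetSum_apply, mul_comm]
  rw [gPhi, coe_eval₂Hom, eval₂_monomial, Finsupp.prod_fintype _ _ (by simp)]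
  simp only [monomial_pow]
  rw [h1, gQ]
  have h2 : ∀ s : Finset (Fin (d + 1)),
      ∏ x ∈ s, (monomial (e x • gE 1 x.val)) (gP x.val ^ e x) =
        monomial (∑ x ∈ s, e x • gE 1 x.val) (∏ x ∈ s, gP x.val ^ e x) := by
    classical
    intro s
    induction s using Finset.induction_on with
    | empty => simp
    | insert a s ha ih =>
      rw [Finset.prod_insert ha, Finset.sum_insert ha, Finset.prod_insert ha, ih, monomial_mul]
  rw [RingHom.comp_apply, h2, C_mul_monomial]

theorem gPhi_ker {d : ℕ} {f : MvPolynomial (Fin (d + 1)) ℂ} (hf : f ∈ gammaIdeal d) :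
    gPhi d f = 0 := by
  have : gammaIdeal d ≤ RingHom.ker (gPhi d) := by
    rw [gammaIdeal, Ideal.span_le]
    rintro p ⟨s, hs, rfl⟩
    rw [SetLike.mem_coe, RingHom.mem_ker]
    have hX : ∀ (c : ℕ) (hc : c + 1 < d + 1), gPhi d (X ⟨c + 1, hc⟩) =
        (monomial (gE 0 1) (Polynomial.X) + monomial (gE 0 1) 1 * gPhi d (C (c : ℂ)))
          * gPhi d (X ⟨c, by omega⟩) := by
      intro c hc
      have hE : gE 1 (c + 1) = gE 0 1 + gE 1 c := by
        ext j
        fin_cases j <;> simp [gE, add_comm]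
      simp only [gPhi, coe_eval₂Hom, eval₂_X, eval₂_C, RingHom.comp_apply]
      rw [mul_comm (monomial (gE 0 1) (1 : Polynomial ℂ)), C_mul_monomial, ← map_add,
        monomial_mul, ← hE, gP, gP, Finset.prod_range_succ]
      congr 1
      ring
    rw [Matrix.det_fin_three]
    simp only [Matrix.submatrix_apply, gammaMatrix, Matrix.of_apply, id, Matrix.cons_val,
      map_sub, map_add, map_mul, hX]
    ring
  exact this hf

theorem gPhi_coeff {d : ℕ} {f : MvPolynomial (Fin (d + 1)) ℂ} (hf : gPhi d f = 0) (D W : ℕ) :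
    ∑ e ∈ f.support.filter (fun e => gDeg e = D ∧ gWt e = W),
      Polynomial.C (coeff e f) * gQ e = 0 := by
  have h := congrArg (coeff (gE D W)) hf
  conv at h => lhs; rw [f.as_sum]
  rw [map_sum, coeff_sum, coeff_zero] at h
  rw [Finset.sum_filter]
  refine Eq.trans ?_ h
  refine Finset.sum_congr rfl fun e _ => ?_
  rw [gPhi_monomial, coeff_monomial]
  simp only [gE_inj]


/-- Standardness of an exponent. -/
def gStd {d : ℕ} (e : Fin (d + 1) →₀ ℕ) : Prop :=
  ∀ a j k : Fin (d + 1), 1 ≤ a.val → a.val ≤ j.val → j.val < k.val → k.val < d →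
    ¬ (∀ i, (Finsupp.single a 1 + Finsupp.single j 1 + Finsupp.single k 1 : Fin (d + 1) →₀ ℕ) i
      ≤ e i)

/-- largest index below `d` that occurs -/
def gK {d : ℕ} (e : Fin (d + 1) →₀ ℕ) : ℕ :=
  (Finset.univ.filter (fun i : Fin (d + 1) => i.val < d ∧ e i ≠ 0)).sup Fin.val

theorem gK_lt {d : ℕ} (hd : 0 < d) (e : Fin (d + 1) →₀ ℕ) : gK e < d := by
  rw [gK, Finset.sup_lt_iff (by simpa using hd)]
  intro i hi
  simp at hi
  exact hi.1

theorem gK_zero {d : ℕ} (e : Fin (d + 1) →₀ ℕ) (i : Fin (d + 1)) (h1 : gK e < i.val)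
    (h2 : i.val < d) : e i = 0 := by
  by_contra h
  have : i.val ≤ gK e := Finset.le_sup (f := Fin.val) (by simp [h2, h])
  omega

theorem gK_mem {d : ℕ} (e : Fin (d + 1) →₀ ℕ) (h : 0 < gK e) :
    ∀ i : Fin (d + 1), i.val = gK e → e i ≠ 0 := by
  have hne : (Finset.univ.filter (fun i : Fin (d + 1) => i.val < d ∧ e i ≠ 0)).Nonempty := by
    by_contra hn
    rw [Finset.not_nonempty_iff_eq_empty] at hn
    rw [gK, hn] at h
    simp at h
  obtain ⟨j, hj, hjk⟩ := Finset.exists_mem_eq_sup _ hne Fin.val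
  intro i hi
  have : i = j := Fin.ext (hi.trans hjk)
  subst this
  simp at hj
  exact hj.2

theorem gStd_struct {d : ℕ} (hd : 0 < d) (e : Fin (d + 1) →₀ ℕ) (he : gStd e) :
    ∃ j a n : ℕ, (j < gK e ∨ (j = 0 ∧ n = 0 ∧ gK e = 0)) ∧
      ∀ i : Fin (d + 1), e i + (if i.val = 0 then 1 else 0) =
        (if i.val = 0 then a else 0) + (if i.val = j then 1 else 0)
          + (if i.val = gK e then n else 0) + (if i.val = d then e (Fin.last d) else 0) := by
  have hlt := gK_lt hd e
  have hz := gK_zero e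
  have hm := gK_mem e
  generalize gK e = k at *
  have hlast : ∀ i : Fin (d + 1), i.val = d → e i = e (Fin.last d) := by
    intro i hi
    congr 1
    exact Fin.ext hi
  have h0 : ∀ i : Fin (d + 1), i.val = 0 → e i = e 0 := by
    intro i hi
    congr 1
    exact Fin.ext hi
  have hk : ∀ i : Fin (d + 1), i.val = k → e i = e ⟨k, by omega⟩ := by
    intro i hi
    congr 1
    exact Fin.ext hi
  by_cases hk0 : k = 0
  · refine ⟨0, e 0, 0, Or.inr ⟨rfl, rfl, hk0⟩, fun i => ?_⟩
    have a1 := hlast i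
    have a2 := h0 i
    have a3 := hz i
    have a4 := i.isLt
    split_ifs <;> omega
  · by_cases hall : ∀ i : Fin (d + 1), 0 < i.val → i.val < k → e i = 0
    · refine ⟨0, e 0, e ⟨k, by omega⟩, Or.inl (by omega), fun i => ?_⟩
      have a1 := hlast i
      have a2 := h0 i
      have a3 := hz i
      have a4 := i.isLt
      have a5 := hk i
      have a6 := hall i
      split_ifs <;> omega
    · push Not at hall
      obtain ⟨j, hj0, hjk, hej⟩ := hall
      have hkk := hm (by omega) ⟨k, by omega⟩ rfl
      have hj1 : e j = 1 := by
        by_contra hne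
        refine he j j ⟨k, by omega⟩ hj0 le_rfl hjk hlt fun i => ?_
        simp only [Finsupp.add_apply, Finsupp.single_apply]
        by_cases hi : j = i
        · subst hi
          rw [if_pos rfl, if_neg (by intro h; rw [← h] at hjk; simp at hjk)]
          omega
        · rw [if_neg hi]
          split_ifs with h
          · rw [← h]; omega
          · omega
      have hother : ∀ i : Fin (d + 1), 0 < i.val → i.val < k → i.val ≠ j.val → e i = 0 := by
        intro l hl0 hlk hlj
        by_contra hne
        have hlow : ∀ i, (Finsupp.single l 1 + Finsupp.single j 1
            + Finsupp.single ⟨k, by omega⟩ 1 : Fin (d + 1) →₀ ℕ) i ≤ e i := by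
          intro i
          simp only [Finsupp.add_apply, Finsupp.single_apply, Fin.ext_iff]
          have b1 : l.val = i.val → e i = e l := fun h => by rw [Fin.ext h]
          have b2 : j.val = i.val → e i = e j := fun h => by rw [Fin.ext h]
          have b3 : k = i.val → e i = e ⟨k, by omega⟩ := fun h => hk i h.symm
          split_ifs <;> omega
        rcases lt_or_gt_of_ne hlj with h | h
        · exact he l j ⟨k, by omega⟩ hl0 h.le hjk hlt hlow
        · refine he j l ⟨k, by omega⟩ hj0 h.le hlk hlt ?_
          rwa [add_comm (Finsupp.single j 1) (Finsupp.single l 1)]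
      refine ⟨j.val, e 0 + 1, e ⟨k, by omega⟩, Or.inl hjk, fun i => ?_⟩
      have a1 := hlast i
      have a2 := h0 i
      have a3 := hz i
      have a4 := i.isLt
      have a5 := hk i
      have a6 := hother i
      have a7 : i.val = j.val → e i = e j := fun h => by rw [Fin.ext h]
      split_ifs <;> omega

theorem g_sum_ite {d : ℕ} (m : ℕ) (hm : m < d + 1) (c : ℕ) :
    (∑ i : Fin (d + 1), if i.val = m then c else 0) = c ∧
    (∑ i : Fin (d + 1), i.val * if i.val = m then c else 0) = m * c := by
  have : ∀ i : Fin (d + 1), i.val = m ↔ i = ⟨m, hm⟩ := fun i => by rw [Fin.ext_iff]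
  simp [this]

theorem gStd_unique {d : ℕ} (hd : 0 < d) (e e' : Fin (d + 1) →₀ ℕ) (he : gStd e) (he' : gStd e')
    (hD : gDeg e = gDeg e') (hW : gWt e = gWt e') (hK : gK e = gK e')
    (hb : e (Fin.last d) = e' (Fin.last d)) : e = e' := by
  have hsums : ∀ (e : Fin (d + 1) →₀ ℕ) (j a k n b : ℕ), j < d + 1 → k < d + 1 →
      (∀ i : Fin (d + 1), e i + (if i.val = 0 then 1 else 0) =
        (if i.val = 0 then a else 0) + (if i.val = j then 1 else 0)
          + (if i.val = k then n else 0) + (if i.val = d then b else 0)) →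
      gDeg e + 1 = a + 1 + n + b ∧ gWt e = j + k * n + d * b := by
    intro e j a k n b hj hk h
    have h1 := Finset.sum_congr (rfl : (Finset.univ : Finset (Fin (d + 1))) = _) (fun i _ => h i)
    have h2 := Finset.sum_congr (rfl : (Finset.univ : Finset (Fin (d + 1))) = _)
      (fun i _ => congrArg (fun t => i.val * t) (h i))
    simp only [Finset.sum_add_distrib, (g_sum_ite 0 (Nat.succ_pos d) _).1,
      (g_sum_ite j hj _).1, (g_sum_ite k hk _).1, (g_sum_ite d (Nat.lt_succ_self d) _).1] at h1
    simp only [mul_add, Finset.sum_add_distrib, (g_sum_ite 0 (Nat.succ_pos d) _).2,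
      (g_sum_ite j hj _).2, (g_sum_ite k hk _).2, (g_sum_ite d (Nat.lt_succ_self d) _).2] at h2
    refine ⟨h1, ?_⟩
    unfold gWt
    omega
  have hlt := gK_lt hd e
  obtain ⟨j, a, n, hc, h⟩ := gStd_struct hd e he
  obtain ⟨j', a', n', hc', h'⟩ := gStd_struct hd e' he'
  rw [← hK] at hc' h'
  rw [← hb] at h'
  obtain ⟨s1, s2⟩ := hsums e j a _ n _ (by omega) (by omega) h
  obtain ⟨t1, t2⟩ := hsums e' j' a' _ n' _ (by omega) (by omega) h'
  have hjn : j = j' ∧ n = n' := by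
    rcases hc with hc | ⟨hc1, hc2, hc3⟩
    · have hc'' : j' < gK e := by omega
      have h1 : j + gK e * n = j' + gK e * n' := by omega
      have h2 := congrArg (· / gK e) h1
      have h3 := congrArg (· % gK e) h1
      simp only [Nat.add_mul_mod_self_left, Nat.mod_eq_of_lt hc, Nat.mod_eq_of_lt hc'',
        Nat.add_mul_div_left _ _ (show 0 < gK e by omega), Nat.div_eq_of_lt hc,
        Nat.div_eq_of_lt hc''] at h2 h3
      omega
    · omega
  obtain ⟨rfl, rfl⟩ := hjn
  have ha : a = a' := by omega
  subst ha
  ext i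
  have := h i
  have := h' i
  omega

theorem g_indep {d : ℕ} (hd : 0 < d) {r : MvPolynomial (Fin (d + 1)) ℂ} (hr : gPhi d r = 0)
    (hstd : ∀ e ∈ r.support, gStd e) : r = 0 := by
  by_contra hr0
  obtain ⟨e0, he0⟩ := support_nonempty.2 hr0
  set T := r.support.filter (fun e => gDeg e = gDeg e0 ∧ gWt e = gWt e0) with hT
  have hTne : T.Nonempty := ⟨e0, Finset.mem_filter.2 ⟨he0, rfl, rfl⟩⟩
  obtain ⟨e, heT, hmin⟩ := T.exists_min_image (fun e => toLex (e (Fin.last d), gK e)) hTne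
  have hsum := gPhi_coeff hr (gDeg e0) (gWt e0)
  rw [← hT, ← Finset.add_sum_erase _ _ heT] at hsum
  have hlt := gK_lt hd e
  set L : Polynomial ℂ := Polynomial.X + Polynomial.C (gK e : ℂ) with hL
  set b := e (Fin.last d) with hb
  have hdvd : L ^ (b + 1) ∣ ∑ e' ∈ T.erase e, Polynomial.C (coeff e' r) * gQ e' := by
    refine Finset.dvd_sum fun e' he' => Dvd.dvd.mul_left ?_ _
    obtain ⟨hne, he'T⟩ := Finset.mem_erase.1 he'
    obtain ⟨R, hR, -⟩ := gQ_factor (gK e) e'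
    rw [hR]
    refine Dvd.dvd.mul_right (pow_dvd_pow _ ?_) _
    have hm := hmin e' he'T
    rw [Prod.Lex.toLex_le_toLex] at hm
    have hlast : ∀ F : Finset (Fin (d + 1)), (∑ i ∈ F, if gK e < i.val then e' i else 0) ≤
        ∑ i, if gK e < i.val then e' i else 0 :=
      fun F => Finset.sum_le_sum_of_subset (Finset.subset_univ F)
    rcases hm with hm | ⟨hm1, hm2⟩
    · refine le_trans ?_ (hlast {Fin.last d})
      simp only [Finset.sum_singleton, Fin.val_last, if_pos hlt]
      exact hm
    · have hKlt : gK e < gK e' := by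
        refine lt_of_le_of_ne hm2 fun hK => hne ?_
        simp only [hT, Finset.mem_filter] at heT he'T
        exact (gStd_unique hd e e' (hstd e heT.1) (hstd e' he'T.1)
          (heT.2.1.trans he'T.2.1.symm) (heT.2.2.trans he'T.2.2.symm) hK hm1).symm
      have hlt' := gK_lt hd e'
      have hpos := gK_mem e' (by omega) ⟨gK e', by omega⟩ rfl
      refine le_trans ?_ (hlast {Fin.last d, ⟨gK e', by omega⟩})
      rw [Finset.sum_pair (by rw [Ne, Fin.ext_iff, Fin.val_last]; simp only; omega)]
      simp only [Fin.val_last, if_pos hlt, if_pos hKlt]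
      have : b = e' (Fin.last d) := hm1
      omega
  obtain ⟨R, hR, hR0⟩ := gQ_factor (gK e) e
  have hexp : (∑ i : Fin (d + 1), if gK e < i.val then e i else 0) = b := by
    rw [Finset.sum_eq_single (Fin.last d)]
    · rw [Fin.val_last, if_pos hlt]
    · intro i _ hi
      split_ifs with h
      · refine gK_zero e i h ?_
        have := i.isLt
        have : i.val ≠ d := fun h => hi (Fin.ext h)
        omega
      · rfl
    · simp
  rw [hexp] at hR
  have h2 : L ^ (b + 1) ∣ Polynomial.C (coeff e r) * gQ e :=
    (dvd_add_left hdvd).1 (by rw [hsum]; exact dvd_zero _)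
  rw [hR, pow_succ, mul_left_comm] at h2
  have hL0 : L ^ b ≠ 0 := pow_ne_zero _ (Polynomial.X_add_C_ne_zero _)
  have h3 := (mul_dvd_mul_iff_left hL0).1 h2
  obtain ⟨q, hq⟩ := h3
  have h4 := congrArg (Polynomial.eval (-(gK e : ℂ))) hq
  simp only [Polynomial.eval_mul, Polynomial.eval_C, hL, Polynomial.eval_add,
    Polynomial.eval_X, neg_add_cancel, zero_mul] at h4
  rcases mul_eq_zero.1 h4 with h5 | h5
  · have : e ∈ r.support := (Finset.mem_filter.1 heT).1
    exact (mem_support_iff.1 this) h5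
  · exact hR0 h5

theorem g_antidiag {d : ℕ} (s : Fin 3 → Fin d) :
    gammaMatrix d 0 (s 2) * gammaMatrix d 1 (s 1) * gammaMatrix d 2 (s 0) =
      monomial (Finsupp.single (s 0).succ 1 + Finsupp.single (s 1).castSucc 1
        + Finsupp.single (s 2).castSucc 1) (((s 2).val : ℕ) : ℂ) := by
  have h : ∀ (a b c : Fin (d + 1) →₀ ℕ) (z : ℂ),
      C z * monomial a 1 * monomial b 1 * monomial c 1 = monomial (c + b + a) z := by
    intro a b c z
    rw [C_mul_monomial, monomial_mul, monomial_mul, mul_one, mul_one, mul_one]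
    congr 1
    abel_nf
  rw [← h]
  rfl

theorem g_antidiag_support {d : ℕ} (s : Fin 3 → Fin d) (hs : StrictMono s) :
    (gammaMatrix d 0 (s 2) * gammaMatrix d 1 (s 1) * gammaMatrix d 2 (s 0)).support =
      {Finsupp.single (s 0).succ 1 + Finsupp.single (s 1).castSucc 1
        + Finsupp.single (s 2).castSucc 1} := by
  classical
  have h1 : s 1 < s 2 := hs (by decide)
  have h2 : (((s 2).val : ℕ) : ℂ) ≠ 0 := by
    rw [Nat.cast_ne_zero]
    have : (s 1).val < (s 2).val := h1
    omega
  rw [g_antidiag, support_monomial, if_neg h2]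

/-- The `3 × 3` minors of `G` form a Gröbner basis of `I₃(G)` with respect to any monomial
order for which the leading monomial of each minor is its antidiagonal monomial (the unique
monomial of the product of the `(1,k)`, `(2,j)`, `(3,i)` entries of `G` for columns
`i < j < k`): for every nonzero `f ∈ I₃(G)`, the leading monomial of `f` (the `≼`-largest
element of its support) is divisible by the antidiagonal monomial of some minor. -/
theorem gamma_groebnerBasis (d : ℕ) (hd : 3 ≤ d)
    (le : (Fin (d + 1) →₀ ℕ) → (Fin (d + 1) →₀ ℕ) → Prop)
    (hlin : IsLinearOrder _ le)
    (hadd : ∀ a b c : Fin (d + 1) →₀ ℕ, le a b → le (a + c) (b + c))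
    (hzero : ∀ a : Fin (d + 1) →₀ ℕ, le 0 a)
    (hlead : ∀ s : Fin 3 → Fin d, StrictMono s →
      ∀ a ∈ (gammaMatrix d 0 (s 2) * gammaMatrix d 1 (s 1)
          * gammaMatrix d 2 (s 0)).support,
        a ∈ (((gammaMatrix d).submatrix id s).det).support ∧
          ∀ b ∈ (((gammaMatrix d).submatrix id s).det).support, le b a)
    (f : MvPolynomial (Fin (d + 1)) ℂ) (hf : f ∈ gammaIdeal d) (hf0 : f ≠ 0) :
    ∃ lmf ∈ f.support, (∀ b ∈ f.support, le b lmf) ∧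
      ∃ s : Fin 3 → Fin d, StrictMono s ∧
        ∃ a ∈ (gammaMatrix d 0 (s 2) * gammaMatrix d 1 (s 1)
            * gammaMatrix d 2 (s 0)).support,
          ∀ i : Fin (d + 1), a i ≤ lmf i := by
  classical
  set m := gammaOrder d le hlin hadd hzero with hm
  have hle : ∀ a b, m.toSyn a ≤ m.toSyn b ↔ le a b := gammaOrder_le_iff d le hlin hadd hzero
  refine ⟨m.degree f, (m.degree_mem_support_iff f).2 hf0,
    fun b hb => (hle _ _).1 (m.le_degree hb), ?_⟩
  by_contra hcon
  push Not at hcon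
  -- leading monomials of the minors
  have hdeg : ∀ s : Fin 3 → Fin d, StrictMono s →
      ((gammaMatrix d).submatrix id s).det ≠ 0 ∧
      m.degree ((gammaMatrix d).submatrix id s).det =
        Finsupp.single (s 0).succ 1 + Finsupp.single (s 1).castSucc 1
        + Finsupp.single (s 2).castSucc 1 := by
    intro s hs
    obtain ⟨h1, h2⟩ := hlead s hs _
      (by rw [g_antidiag_support s hs]; exact Finset.mem_singleton_self _)
    have hne : ((gammaMatrix d).submatrix id s).det ≠ 0 := by
      rintro h0
      rw [h0] at h1
      simp at h1
    refine ⟨hne, m.toSyn.injective (le_antisymm ?_ (m.le_degree h1))⟩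
    exact (hle _ _).2 (h2 _ ((m.degree_mem_support_iff _).2 hne))
  obtain ⟨g, r, hfr, hg, hr⟩ := m.div_set
    (B := { p | ∃ s : Fin 3 → Fin d, StrictMono s ∧ p = ((gammaMatrix d).submatrix id s).det })
    (by
      rintro b ⟨s, hs, rfl⟩
      exact (m.leadingCoeff_ne_zero_iff.2 (hdeg s hs).1).isUnit) f
  have hlin_mem : Finsupp.linearCombination _ (fun b : { p | ∃ s : Fin 3 → Fin d,
      StrictMono s ∧ p = ((gammaMatrix d).submatrix id s).det } =>
        (b : MvPolynomial (Fin (d + 1)) ℂ)) g ∈ gammaIdeal d := by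
    rw [Finsupp.linearCombination_apply]
    refine Ideal.sum_mem _ fun b _ => ?_
    exact Ideal.mul_mem_left _ _ (Ideal.subset_span b.2)
  have hrI : r ∈ gammaIdeal d := by
    have : r = f - Finsupp.linearCombination _ (fun b : { p | ∃ s : Fin 3 → Fin d,
      StrictMono s ∧ p = ((gammaMatrix d).submatrix id s).det } =>
        (b : MvPolynomial (Fin (d + 1)) ℂ)) g := by
      exact eq_sub_of_add_eq' hfr.symm
    rw [this]
    exact Ideal.sub_mem _ hf hlin_mem
  have hr0 : r = 0 := by
    refine g_indep (by omega) (gPhi_ker hrI) fun e he a j k ha haj hjk hkd hdiv => ?_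
    let s : Fin 3 → Fin d := ![⟨a.val - 1, by omega⟩, ⟨j.val, by omega⟩, ⟨k.val, by omega⟩]
    have hs : StrictMono s := by
      rw [Fin.strictMono_iff_lt_succ]
      intro i
      fin_cases i
      · change a.val - 1 < j.val
        omega
      · exact hjk
    refine hr e he _ ⟨s, hs, rfl⟩ ?_
    rw [(hdeg s hs).2]
    have e1 : (s 0).succ = a := Fin.ext (by change a.val - 1 + 1 = a.val; omega)
    have e2 : (s 1).castSucc = j := rfl
    have e3 : (s 2).castSucc = k := rfl
    rw [e1, e2, e3]
    exact hdiv
  rw [hr0, add_zero] at hfr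
  -- some summand reaches the leading monomial of `f`
  have hmem := (m.degree_mem_support_iff f).2 hf0
  rw [mem_support_iff] at hmem
  apply hmem
  have hco := congrArg (coeff (m.degree f)) hfr
  rw [hco]
  rw [Finsupp.linearCombination_apply, Finsupp.sum, coeff_sum]
  refine Finset.sum_eq_zero fun b hb => ?_
  by_contra hne
  obtain ⟨s, hs, hbs⟩ := b.2
  have hgb : g b ≠ 0 := Finsupp.mem_support_iff.1 hb
  have hb0 : (b : MvPolynomial (Fin (d + 1)) ℂ) ≠ 0 := by rw [hbs]; exact (hdeg s hs).1
  rw [smul_eq_mul, mul_comm] at hne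
  have heq : m.degree ((b : MvPolynomial (Fin (d + 1)) ℂ) * g b) = m.degree f :=
    m.toSyn.injective (le_antisymm (hg b) (m.le_degree (mem_support_iff.2 hne)))
  rw [m.degree_mul hb0 hgb, hbs, (hdeg s hs).2] at heq
  obtain ⟨i, hi⟩ := hcon s hs _
    (by rw [g_antidiag_support s hs]; exact Finset.mem_singleton_self _)
  rw [← heq, Finsupp.add_apply _ (m.degree (g b))] at hi
  omega
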